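/- In the setting above (σ measurable and polynomially bounded, k ≥ 1, P ≥ k, Σ_n := Σ_{1-k/n}, R_{P,n} its degree-P Taylor remainder at 0, G = Σ_{i=1}^k w_i x_i + b with w_i, b i.i.d. N(0,1/n) and x uniform on {±1}^k, conditioning on the signs of the weights and bias): for any constant D > 0, there exist constants C₁, C₂ > 0 such that the conditional expectation E[|R_{P,n}(G)|·1(|G| > D)] ≤ C₁·exp(−C₂·n) for all n, uniformly over the conditioned signs. -/

import Mathlib

open MeasureTheory ProbabilityTheory Filter Finset Asymptotics
open scoped NNReal ENNReal

noncomputable section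

/-- The ±1 value encoded by a Boolean bit. -/
def bsign (b : Bool) : ℝ := if b then 1 else -1

/-- Expectation over a uniformly random point of the Boolean cube `{±1}^n`. -/
def bExp (n : ℕ) (g : (Fin n → Bool) → ℝ) : ℝ :=
  (∑ x : Fin n → Bool, g x) / 2 ^ n

/-- A function on the Boolean cube is Boolean(-valued) if it takes values in `{±1}`. -/
def IsBooleanFn {n : ℕ} (f : (Fin n → Bool) → ℝ) : Prop := ∀ x, f x = 1 ∨ f x = -1

/-- Initialization distribution: the weights `w : ℝⁿ` and the bias `b` are
iid `N(0, 1/n)` Gaussians. -/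
def initMeasure (n : ℕ) : Measure ((Fin n → ℝ) × ℝ) :=
  (Measure.pi fun _ : Fin n => gaussianReal 0 (n : ℝ≥0)⁻¹).prod (gaussianReal 0 (n : ℝ≥0)⁻¹)

/-- Initial alignment `INAL(f, σ) = E_{w,b} [ (E_x [f(x) σ(wᵀx + b)])² ]`. -/
def INAL (n : ℕ) (f : (Fin n → Bool) → ℝ) (σ : ℝ → ℝ) : ℝ :=
  ∫ θ : (Fin n → ℝ) × ℝ,
    (bExp n fun x => f x * σ (∑ i, θ.1 i * bsign (x i) + θ.2)) ^ 2 ∂ initMeasure n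

/-- The `v`-Gaussian smoothing `Σ_v(t) = E_{Y ∼ N(0,v)} [σ(Y + t)]`. -/
def gsmooth (σ : ℝ → ℝ) (v : ℝ) (t : ℝ) : ℝ :=
  ∫ y, σ (y + t) ∂ gaussianReal 0 v.toNNReal

/-- `σ` is polynomially bounded: `|σ(x)| ≤ C |x|^c + C` for some `C, c > 0`. -/
def PolyBounded (σ : ℝ → ℝ) : Prop :=
  ∃ C : ℝ, 0 < C ∧ ∃ c : ℕ, 0 < c ∧ ∀ x : ℝ, |σ x| ≤ C * |x| ^ c + C

/-- `σ` is expressive: measurable, polynomially bounded, and its Gaussian smoothing has no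
two consecutive vanishing derivatives at `0`. -/
def Expressive (σ : ℝ → ℝ) : Prop :=
  Measurable σ ∧ PolyBounded σ ∧
    ∀ m : ℕ, iteratedDeriv m (gsmooth σ 1) 0 ≠ 0 ∨ iteratedDeriv (m + 1) (gsmooth σ 1) 0 ≠ 0

/-- A nonnegative sequence is negligible if it decays faster than any inverse polynomial. -/
def Negligible (g : ℕ → ℝ) : Prop :=
  ∀ c : ℕ, Tendsto (fun n : ℕ => (n : ℝ) ^ c * g n) atTop (nhds 0)

/-- Fourier character `M_S(x) = ∏_{i ∈ S} x_i`. -/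
def chi {n : ℕ} (S : Finset (Fin n)) (x : Fin n → Bool) : ℝ := ∏ i ∈ S, bsign (x i)

/-- Fourier coefficient `f̂(S) = E_x [f(x) M_S(x)]`. -/
def fourierCoef (n : ℕ) (f : (Fin n → Bool) → ℝ) (S : Finset (Fin n)) : ℝ :=
  bExp n fun x => f x * chi S x

/-- Fourier weight up to degree `k`: `W^{≤k}(f)`. -/
def weightLE (n k : ℕ) (f : (Fin n → Bool) → ℝ) : ℝ :=
  ∑ S ∈ Finset.univ.filter (fun S : Finset (Fin n) => S.card ≤ k), fourierCoef n f S ^ 2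

/-- Fourier weight strictly below degree `k`: `W^{<k}(f)`. -/
def weightLT (n k : ℕ) (f : (Fin n → Bool) → ℝ) : ℝ :=
  ∑ S ∈ Finset.univ.filter (fun S : Finset (Fin n) => S.card < k), fourierCoef n f S ^ 2

/-- The monomial `M_k(x) = ∏_{i=1}^k x_i`, viewed as a function on `{±1}^n`. -/
def monomial (n k : ℕ) : (Fin n → Bool) → ℝ :=
  fun x => ∏ i ∈ Finset.univ.filter (fun i : Fin n => (i : ℕ) < k), bsign (x i)

/-- The `N`-extension of `f : {±1}^n → ℝ` (for `n ≤ N`): ignore the last `N - n` coordinates. -/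
def extendFn (n N : ℕ) (f : (Fin n → Bool) → ℝ) : (Fin N → Bool) → ℝ :=
  fun x => f fun i => if h : (i : ℕ) < N then x ⟨i, h⟩ else false

/-- Cross-predictability of (the uniform distribution on) the orbit of `f` under coordinate
permutations, with uniform inputs: `CP(orb(f), U^N)`. -/
def orbitCP (N : ℕ) (f : (Fin N → Bool) → ℝ) : ℝ :=
  (∑ π : Equiv.Perm (Fin N), ∑ π' : Equiv.Perm (Fin N),
      (bExp N fun x => f (fun i => x (π i)) * f (fun i => x (π' i))) ^ 2) /
    (Fintype.card (Equiv.Perm (Fin N))) ^ 2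

/-- `N = n^{1+ε}` (rounded up). -/
def Ndim (ε : ℝ) (n : ℕ) : ℕ := ⌈(n : ℝ) ^ (1 + ε)⌉₊

/-- The distribution of `(|w_1|, …, |w_k|, |b|)` is generated from `k + 1` iid `N(0, 1/n)`
variables (of which we take absolute values below). -/
def weightMeasure (n k : ℕ) : Measure ((Fin k → ℝ) × ℝ) :=
  (Measure.pi fun _ : Fin k => gaussianReal 0 (n : ℝ≥0)⁻¹).prod (gaussianReal 0 (n : ℝ≥0)⁻¹)

/-- `G = Σ_{i=1}^k τ_i |w_i| x_i + s |b|`, i.e. `Σ w_i x_i + b` conditioned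
on `sign(w_i) = τ_i` and `sign(b) = s`. -/
def Gval (k : ℕ) (τ : Fin k → ℝ) (s : ℝ) (g : (Fin k → ℝ) × ℝ) (x : Fin k → Bool) : ℝ :=
  ∑ i, τ i * |g.1 i| * bsign (x i) + s * |g.2|

/-- The conditional expectation `E[M_k(x) · F(G) | sign(w) = τ, sign(b) = s]`,
taken over `|w_1|, …, |w_k|, |b|` and uniform `x ∈ {±1}^k`. -/
def condExpFn (n k : ℕ) (τ : Fin k → ℝ) (s : ℝ) (F : ℝ → ℝ) : ℝ :=
  ∫ g : (Fin k → ℝ) × ℝ,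
    (bExp k fun x => (∏ i, bsign (x i)) * F (Gval k τ s g x)) ∂ weightMeasure n k

/-- The conditional moment `E[M_k(x) · G^ν | sign(w) = τ, sign(b) = s]`. -/
def condMoment (n k : ℕ) (τ : Fin k → ℝ) (s : ℝ) (ν : ℕ) : ℝ :=
  condExpFn n k τ s fun z => z ^ ν

/-- `s` is a sign. -/
def IsSign (s : ℝ) : Prop := s = 1 ∨ s = -1

/-- The degree-`P` Taylor remainder of the `v`-Gaussian smoothing `Σ_v` at `0`:
`R(z) = Σ_v(z) − Σ_{ν=0}^P Σ_v^{(ν)}(0)/ν! · z^ν`. -/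
def taylorRem (σ : ℝ → ℝ) (v : ℝ) (P : ℕ) (z : ℝ) : ℝ :=
  gsmooth σ v z -
    ∑ ν ∈ Finset.range (P + 1),
      iteratedDeriv ν (gsmooth σ v) 0 / (ν.factorial : ℝ) * z ^ ν

lemma aux_poly (σ : ℝ → ℝ) (hpb : PolyBounded σ) :
    ∃ M : ℝ, 0 < M ∧ ∀ x, |σ x| ≤ M * Real.exp |x| := by
  obtain ⟨C, hC, c, hc, h⟩ := hpb
  refine ⟨C * (c.factorial + 1), by positivity, fun x => (h x).trans ?_⟩
  have h1 := Real.pow_div_factorial_le_exp _ (abs_nonneg x) c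
  rw [div_le_iff₀ (by positivity)] at h1
  have h2 := Real.one_le_exp (abs_nonneg x)
  nlinarith

lemma aux_kernel (w : ℝ) (hw : 1 / 2 ≤ w) (hw1 : w ≤ 1) (K : ℝ) (y : ℝ) (z : ℂ)
    (hz : ‖z‖ ≤ K) :
    ‖Complex.exp (-((y : ℂ) - z) ^ 2 * w)‖ ≤ Real.exp (K ^ 2 - y ^ 2 / 4) := by
  rw [Complex.norm_exp]
  apply Real.exp_le_exp.mpr
  have h1 : z.re ^ 2 + z.im ^ 2 ≤ K ^ 2 := by
    have : ‖z‖ ^ 2 ≤ K ^ 2 := by gcongr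
    rw [← Complex.normSq_eq_norm_sq, Complex.normSq_apply] at this
    nlinarith
  have h2 : (-((y : ℂ) - z) ^ 2 * w).re = -((y - z.re) ^ 2 - z.im ^ 2) * w := by
    simp [pow_two]
    ring
  rw [h2]
  have h3 : y ^ 2 / 2 - K ^ 2 ≤ (y - z.re) ^ 2 - z.im ^ 2 := by nlinarith [sq_nonneg (y - 2 * z.re)]
  have h4 := mul_le_mul_of_nonneg_right h3 (by linarith : 0 ≤ w)
  nlinarith [sq_nonneg y, sq_nonneg K]

lemma aux_exp (y : ℝ) : Real.exp |y| * Real.exp |y| * Real.exp (-(y ^ 2 / 4)) ≤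
    Real.exp 8 * Real.exp (-(1 / 8) * y ^ 2) := by
  rw [← Real.exp_add, ← Real.exp_add, ← Real.exp_add]
  apply Real.exp_le_exp.mpr
  nlinarith [sq_nonneg (|y| - 8), sq_abs y]

/-- the complexified smoothing -/
def Fc (σ : ℝ → ℝ) (w : ℝ) (z : ℂ) : ℂ :=
  ∫ y : ℝ, (σ y : ℂ) * Complex.exp (-((y : ℂ) - z) ^ 2 * w)

lemma aux_bound (σ : ℝ → ℝ) (M : ℝ) (hM : 0 < M) (h : ∀ x, |σ x| ≤ M * Real.exp |x|)
    (w : ℝ) (hw : 1 / 2 ≤ w) (hw1 : w ≤ 1) (K : ℝ) (y : ℝ) (z : ℂ)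
    (hz : ‖z‖ ≤ K) :
    ‖(σ y : ℂ) * Complex.exp (-((y : ℂ) - z) ^ 2 * w)‖ * Real.exp |y| ≤
      M * Real.exp (K ^ 2) * Real.exp 8 * Real.exp (-(1 / 8) * y ^ 2) := by
  rw [norm_mul, Complex.norm_real, Real.norm_eq_abs]
  calc |σ y| * ‖Complex.exp (-((y : ℂ) - z) ^ 2 * w)‖ * Real.exp |y|
      ≤ (M * Real.exp |y|) * Real.exp (K ^ 2 - y ^ 2 / 4) * Real.exp |y| := by
        gcongr
        · exact h y
        · exact aux_kernel w hw hw1 K y z hz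
    _ = M * Real.exp (K ^ 2) * (Real.exp |y| * Real.exp |y| * Real.exp (-(y ^ 2 / 4))) := by
        rw [sub_eq_add_neg, Real.exp_add]; ring
    _ ≤ M * Real.exp (K ^ 2) * (Real.exp 8 * Real.exp (-(1 / 8) * y ^ 2)) := by
        exact mul_le_mul_of_nonneg_left (aux_exp y) (by positivity)
    _ = _ := by ring

lemma aux_bound' (σ : ℝ → ℝ) (M : ℝ) (hM : 0 < M) (h : ∀ x, |σ x| ≤ M * Real.exp |x|)
    (w : ℝ) (hw : 1 / 2 ≤ w) (hw1 : w ≤ 1) (K : ℝ) (y : ℝ) (z : ℂ)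
    (hz : ‖z‖ ≤ K) :
    ‖(σ y : ℂ) * Complex.exp (-((y : ℂ) - z) ^ 2 * w)‖ ≤
      M * Real.exp (K ^ 2) * Real.exp 8 * Real.exp (-(1 / 8) * y ^ 2) :=
  le_trans (le_mul_of_one_le_right (norm_nonneg _) (Real.one_le_exp (abs_nonneg y)))
    (aux_bound σ M hM h w hw hw1 K y z hz)

lemma aux_int (A : ℝ) : Integrable (fun y : ℝ => A * Real.exp (-(1 / 8) * y ^ 2)) :=
  (integrable_exp_neg_mul_sq (by norm_num : (0 : ℝ) < 1 / 8)).const_mul A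

lemma aux_meas (σ : ℝ → ℝ) (hmeas : Measurable σ) (w : ℝ) (z : ℂ) :
    AEStronglyMeasurable (fun y : ℝ => (σ y : ℂ) * Complex.exp (-((y : ℂ) - z) ^ 2 * w)) := by
  apply Measurable.aestronglyMeasurable
  fun_prop

lemma Fc_diff (σ : ℝ → ℝ) (hmeas : Measurable σ) (M : ℝ) (hM : 0 < M)
    (h : ∀ x, |σ x| ≤ M * Real.exp |x|)
    (w : ℝ) (hw : 1 / 2 ≤ w) (hw1 : w ≤ 1) : Differentiable ℂ (Fc σ w) := by
  intro z₀
  have key := hasDerivAt_integral_of_dominated_loc_of_deriv_le (μ := volume) (𝕜 := ℂ)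
    (F := fun z (y : ℝ) => (σ y : ℂ) * Complex.exp (-((y : ℂ) - z) ^ 2 * w))
    (F' := fun z (y : ℝ) => (σ y : ℂ) * Complex.exp (-((y : ℂ) - z) ^ 2 * w)
      * (2 * ((y : ℂ) - z) * w))
    (x₀ := z₀) (s := Metric.ball z₀ 1)
    (bound := fun y => (2 * Real.exp (‖z₀‖ + 1)) * (M * Real.exp ((‖z₀‖ + 1) ^ 2) * Real.exp 8) *
      Real.exp (-(1 / 8) * y ^ 2))
    (Metric.ball_mem_nhds _ one_pos)
    (Eventually.of_forall fun z => aux_meas σ hmeas w z)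
    (Integrable.mono' (aux_int _) (aux_meas σ hmeas w z₀)
      (Eventually.of_forall fun y => aux_bound' σ M hM h w hw hw1 ‖z₀‖ y z₀ le_rfl))
    (by apply Measurable.aestronglyMeasurable; fun_prop)
    (Eventually.of_forall fun y z hz => ?_)
    (aux_int _)
    (Eventually.of_forall fun y z hz => ?_)
  · exact key.2.differentiableAt
  · have hz' : ‖z‖ ≤ ‖z₀‖ + 1 := by
      rw [Metric.mem_ball, dist_eq_norm] at hz
      have := norm_le_norm_add_norm_sub' z z₀
      linarith
    have hb := aux_bound σ M hM h w hw hw1 (‖z₀‖ + 1) y z hz'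
    rw [norm_mul]
    have h2 : ‖2 * ((y : ℂ) - z) * w‖ ≤ 2 * Real.exp (‖z₀‖ + 1) * Real.exp |y| := by
      rw [norm_mul, norm_mul, Complex.norm_real, Real.norm_of_nonneg (by linarith : 0 ≤ w)]
      have h3 : ‖(y : ℂ) - z‖ ≤ |y| + (‖z₀‖ + 1) := by
        refine (norm_sub_le _ _).trans ?_
        rw [Complex.norm_real, Real.norm_eq_abs]
        linarith
      have h4 := Real.add_one_le_exp (‖z₀‖ + 1 + |y|)
      rw [mul_assoc 2 (Real.exp _), ← Real.exp_add]
      have h5 : ‖(2 : ℂ)‖ = 2 := by simp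
      rw [h5]
      have h6 : 0 ≤ ‖(y : ℂ) - z‖ := norm_nonneg _
      nlinarith
    calc _ ≤ ‖(σ y : ℂ) * Complex.exp (-((y : ℂ) - z) ^ 2 * w)‖ *
          (2 * Real.exp (‖z₀‖ + 1) * Real.exp |y|) := by gcongr
      _ = (2 * Real.exp (‖z₀‖ + 1)) *
          (‖(σ y : ℂ) * Complex.exp (-((y : ℂ) - z) ^ 2 * w)‖ * Real.exp |y|) := by ring
      _ ≤ (2 * Real.exp (‖z₀‖ + 1)) * _ := mul_le_mul_of_nonneg_left hb (by positivity)
      _ = _ := by ring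
  · have h1 : HasDerivAt (fun z : ℂ => -((y : ℂ) - z) ^ 2 * w) (2 * ((y : ℂ) - z) * w) z := by
      have h0 := ((((hasDerivAt_id z).const_sub (y : ℂ)).pow 2).neg).mul_const (w : ℂ)
      refine h0.congr_deriv ?_
      simp
    refine ((h1.cexp).const_mul (σ y : ℂ)).congr_deriv ?_
    ring

lemma Fc_bound (σ : ℝ → ℝ) (M : ℝ) (hM : 0 < M)
    (h : ∀ x, |σ x| ≤ M * Real.exp |x|)
    (w : ℝ) (hw : 1 / 2 ≤ w) (hw1 : w ≤ 1) (z : ℂ) (hz : ‖z‖ ≤ 1) :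
    ‖Fc σ w z‖ ≤ ∫ y : ℝ, M * Real.exp (1 ^ 2) * Real.exp 8 * Real.exp (-(1 / 8) * y ^ 2) :=
  norm_integral_le_of_norm_le (aux_int _)
    (Eventually.of_forall fun y => aux_bound' σ M hM h w hw hw1 1 y z hz)

lemma aux_iter (n : ℕ) : ∀ (f : ℂ → ℂ), Differentiable ℂ f →
    ∀ x : ℝ, iteratedDeriv n (fun x : ℝ => (f x).re) x = (iteratedDeriv n f x).re := by
  induction n with
  | zero => intro f hf x; simp
  | succ n ih =>
    intro f hf x
    have h1 : deriv (fun x : ℝ => (f x).re) = fun x : ℝ => (deriv f x).re := by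
      ext x
      exact (hf x).hasDerivAt.real_of_complex.deriv
    rw [iteratedDeriv_succ', iteratedDeriv_succ', h1]
    exact ih _ hf.deriv x

lemma gsmooth_eq (σ : ℝ → ℝ) (v : ℝ) (hv : 0 < v) (t : ℝ) :
    gsmooth σ v t = (((√(2 * Real.pi * v))⁻¹ : ℝ) * Fc σ (2 * v)⁻¹ t : ℂ).re := by
  unfold gsmooth Fc
  rw [integral_gaussianReal_eq_integral_smul (by simpa using hv)]
  rw [Complex.re_ofReal_mul]
  have h1 : (fun y : ℝ => (σ y : ℂ) * Complex.exp (-((y : ℂ) - t) ^ 2 * ((2 * v)⁻¹ : ℝ))) =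
      fun y : ℝ => ((σ y * Real.exp (-(y - t) ^ 2 * (2 * v)⁻¹) : ℝ) : ℂ) := by
    ext y; push_cast; rfl
  rw [h1, integral_complex_ofReal, Complex.ofReal_re, ← integral_const_mul,
    ← integral_add_right_eq_self
      (fun y => (√(2 * Real.pi * v))⁻¹ * (σ y * Real.exp (-(y - t) ^ 2 * (2 * v)⁻¹))) t]
  congr 1
  ext y
  rw [gaussianPDFReal, Real.coe_toNNReal _ hv.le, smul_eq_mul]
  simp only [sub_zero, add_sub_cancel_right, div_eq_mul_inv]
  ring

lemma aux_gauss_int (v : ℝ≥0) (t : ℝ) :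
    Integrable (fun x : ℝ => Real.exp (t * x) + Real.exp (-t * x)) (gaussianReal 0 v) :=
  (integrable_exp_mul_gaussianReal t).add (integrable_exp_mul_gaussianReal (-t))

lemma aux_gauss (v : ℝ≥0) (t : ℝ) :
    ∫ x, (Real.exp (t * x) + Real.exp (-t * x)) ∂gaussianReal 0 v
      = 2 * Real.exp (v * t ^ 2 / 2) := by
  rw [integral_add (integrable_exp_mul_gaussianReal t) (integrable_exp_mul_gaussianReal (-t))]
  have h1 : ∀ s, ∫ x, Real.exp (s * x) ∂gaussianReal 0 v = Real.exp (v * s ^ 2 / 2) := by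
    intro s
    have := mgf_gaussianReal (p := gaussianReal 0 v) (X := id) (μ := 0) (v := v) (by simp) s
    simpa [mgf] using this
  rw [h1, h1]
  ring_nf

lemma aux_abs (t x : ℝ) : Real.exp (t * |x|) ≤ Real.exp (t * x) + Real.exp (-t * x) := by
  rcases abs_cases x with ⟨h, _⟩ | ⟨h, _⟩ <;> rw [h]
  · have := Real.exp_pos (-t * x); linarith
  · have := Real.exp_pos (t * x); rw [show t * -x = -t * x by ring]; linarith

lemma gsmooth_bound (σ : ℝ → ℝ) (M : ℝ) (hM : 0 < M)
    (h : ∀ x, |σ x| ≤ M * Real.exp |x|) (v : ℝ) (hv : 0 ≤ v) (hv1 : v ≤ 1) (t : ℝ) :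
    |gsmooth σ v t| ≤ M * (2 * Real.exp 1) * Real.exp |t| := by
  unfold gsmooth
  rw [← Real.norm_eq_abs]
  refine (norm_integral_le_of_norm_le
    ((aux_gauss_int v.toNNReal 1).const_mul (M * Real.exp |t|))
    (Eventually.of_forall fun y => ?_)).trans ?_
  · rw [Real.norm_eq_abs]
    refine (h _).trans ?_
    rw [mul_assoc]
    gcongr
    have h1 := aux_abs 1 y
    calc Real.exp |y + t| ≤ Real.exp (|t| + 1 * |y|) := by
          apply Real.exp_le_exp.mpr
          have := abs_add_le y t
          linarith
      _ = Real.exp |t| * Real.exp (1 * |y|) := Real.exp_add _ _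
      _ ≤ _ := by gcongr
  · rw [integral_const_mul, aux_gauss, Real.coe_toNNReal _ hv]
    have : Real.exp (v * 1 ^ 2 / 2) ≤ Real.exp 1 := Real.exp_le_exp.mpr (by linarith)
    calc _ ≤ M * Real.exp |t| * (2 * Real.exp 1) := by gcongr
      _ = _ := by ring

lemma gsmooth_deriv_bound (σ : ℝ → ℝ) (hmeas : Measurable σ) (M : ℝ) (hM : 0 < M)
    (h : ∀ x, |σ x| ≤ M * Real.exp |x|) :
    ∃ B : ℝ, 0 ≤ B ∧ ∀ v : ℝ, 1 / 2 ≤ v → v ≤ 1 → ∀ ν : ℕ,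
      |iteratedDeriv ν (gsmooth σ v) 0| ≤ ν.factorial * B := by
  refine ⟨∫ y : ℝ, M * Real.exp (1 ^ 2) * Real.exp 8 * Real.exp (-(1 / 8) * y ^ 2),
    integral_nonneg fun y => by positivity, fun v hv hv1 ν => ?_⟩
  have hw : 1 / 2 ≤ (2 * v)⁻¹ := by
    rw [one_div]; gcongr; linarith
  have hw1 : (2 * v)⁻¹ ≤ 1 := inv_le_one_of_one_le₀ (by linarith)
  set a : ℝ := (√(2 * Real.pi * v))⁻¹ with ha
  have ha0 : 0 ≤ a := by positivity
  have ha1 : a ≤ 1 := by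
    apply inv_le_one_of_one_le₀
    rw [Real.one_le_sqrt]
    nlinarith [Real.pi_gt_three]
  have hd : Differentiable ℂ (fun z => (a : ℂ) * Fc σ (2 * v)⁻¹ z) :=
    (Fc_diff σ hmeas M hM h _ hw hw1).const_mul _
  have heq : gsmooth σ v = fun x : ℝ => ((fun z => (a : ℂ) * Fc σ (2 * v)⁻¹ z) (x : ℂ)).re := by
    ext t
    exact gsmooth_eq σ v (by linarith) t
  rw [heq, aux_iter ν _ hd]
  refine (Complex.abs_re_le_norm _).trans ?_
  have := Complex.norm_iteratedDeriv_le_of_forall_mem_sphere_norm_le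
    (c := ((0 : ℝ) : ℂ)) (R := 1) ν one_pos (hd.diffContOnCl)
    (C := ∫ y : ℝ, M * Real.exp (1 ^ 2) * Real.exp 8 * Real.exp (-(1 / 8) * y ^ 2)) ?_
  · simpa using this
  · intro z hz
    have hz' : ‖z‖ ≤ 1 := by simpa using (mem_sphere_iff_norm.mp hz).le
    rw [norm_mul, Complex.norm_real, Real.norm_of_nonneg ha0]
    refine le_trans ?_ (Fc_bound σ M hM h _ hw hw1 z hz')
    exact mul_le_of_le_one_left (norm_nonneg _) ha1

lemma taylorRem_bound (σ : ℝ → ℝ) (hmeas : Measurable σ) (hpb : PolyBounded σ) (P : ℕ) :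
    ∃ A : ℝ, 0 < A ∧ ∀ v : ℝ, 1 / 2 ≤ v → v ≤ 1 → ∀ z : ℝ,
      |taylorRem σ v P z| ≤ A * Real.exp |z| := by
  obtain ⟨M, hM, h⟩ := aux_poly σ hpb
  obtain ⟨B, hB, hd⟩ := gsmooth_deriv_bound σ hmeas M hM h
  refine ⟨M * (2 * Real.exp 1) + ∑ ν ∈ Finset.range (P + 1), B * ν.factorial, by positivity,
    fun v hv hv1 z => ?_⟩
  unfold taylorRem
  refine (abs_sub _ _).trans ?_
  rw [add_mul, Finset.sum_mul]
  refine add_le_add (gsmooth_bound σ M hM h v (by linarith) hv1 z)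
    ((Finset.abs_sum_le_sum_abs _ _).trans (Finset.sum_le_sum fun ν _ => ?_))
  rw [abs_mul, abs_div, abs_pow, Nat.abs_cast]
  have h1 := Real.pow_div_factorial_le_exp _ (abs_nonneg z) ν
  rw [div_le_iff₀ (by positivity)] at h1
  have h2 : |iteratedDeriv ν (gsmooth σ v) 0| / (ν.factorial : ℝ) ≤ B := by
    rw [div_le_iff₀ (by positivity)]
    have := hd v hv hv1 ν
    linarith
  calc _ ≤ B * (Real.exp |z| * ν.factorial) := by gcongr
    _ = _ := by ring

lemma Gval_le (k : ℕ) (τ : Fin k → ℝ) (hτ : ∀ i, IsSign (τ i)) (s : ℝ) (hs : IsSign s)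
    (g : (Fin k → ℝ) × ℝ) (x : Fin k → Bool) :
    |Gval k τ s g x| ≤ ∑ i, |g.1 i| + |g.2| := by
  have hsg : ∀ s, IsSign s → |s| = 1 := by
    rintro s (rfl | rfl) <;> simp
  unfold Gval
  refine (abs_add_le _ _).trans (add_le_add ((Finset.abs_sum_le_sum_abs _ _).trans
    (Finset.sum_le_sum fun i _ => ?_)) ?_)
  · have : |bsign (x i)| = 1 := by unfold bsign; split_ifs <;> simp
    rw [abs_mul, abs_mul, this, hsg _ (hτ i), abs_abs]; simp
  · rw [abs_mul, hsg s hs, abs_abs]; simp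

lemma main_int (n k : ℕ) (t : ℝ) :
    Integrable (fun g : (Fin k → ℝ) × ℝ =>
      (∏ i, (Real.exp (t * g.1 i) + Real.exp (-t * g.1 i))) *
        (Real.exp (t * g.2) + Real.exp (-t * g.2))) (weightMeasure n k) ∧
    ∫ g : (Fin k → ℝ) × ℝ, (∏ i, (Real.exp (t * g.1 i) + Real.exp (-t * g.1 i))) *
        (Real.exp (t * g.2) + Real.exp (-t * g.2)) ∂weightMeasure n k =
      (2 * Real.exp ((n : ℝ)⁻¹ * t ^ 2 / 2)) ^ (k + 1) := by
  unfold weightMeasure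
  constructor
  · exact Integrable.mul_prod
      (f := fun w : Fin k → ℝ => ∏ i, (Real.exp (t * w i) + Real.exp (-t * w i)))
      (g := fun b : ℝ => Real.exp (t * b) + Real.exp (-t * b))
      (Integrable.fintype_prod (f := fun _ x => Real.exp (t * x) + Real.exp (-t * x))
        fun i => aux_gauss_int _ t) (aux_gauss_int _ t)
  · rw [integral_prod_mul
      (f := fun w : Fin k → ℝ => ∏ i, (Real.exp (t * w i) + Real.exp (-t * w i)))
      (g := fun b : ℝ => Real.exp (t * b) + Real.exp (-t * b)),
      integral_fintype_prod_eq_prod (f := fun _ x => Real.exp (t * x) + Real.exp (-t * x)),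
      aux_gauss]
    simp [pow_succ]

/-- Tail part of the remainder: for any constant `D > 0`, there exist
`C₁, C₂ > 0` such that, conditionally on any fixed signs,
`E[|R_{P,n}(G)| · 1(|G| > D)] ≤ C₁ exp(−C₂ n)`, uniformly over the signs. -/
theorem remainder_tail_region
    (σ : ℝ → ℝ) (hmeas : Measurable σ) (hpb : PolyBounded σ)
    (k P : ℕ) (hk : 1 ≤ k) (hkP : k ≤ P) (D : ℝ) (hD : 0 < D) :
    ∃ C₁ : ℝ, 0 < C₁ ∧ ∃ C₂ : ℝ, 0 < C₂ ∧ ∀ n : ℕ, 2 * k ≤ n →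
      ∀ τ : Fin k → ℝ, (∀ i, IsSign (τ i)) → ∀ s : ℝ, IsSign s →
        (∫ g : (Fin k → ℝ) × ℝ,
            (bExp k fun x =>
              |taylorRem σ (1 - (k : ℝ) / n) P (Gval k τ s g x)| *
                (if D < |Gval k τ s g x| then (1 : ℝ) else 0)) ∂ weightMeasure n k) ≤
          C₁ * Real.exp (-C₂ * n) := by
  obtain ⟨A, hA, hR⟩ := taylorRem_bound σ hmeas hpb P
  set η : ℝ := D / (2 * (k + 1)) with hη
  have hη0 : 0 < η := by positivity
  refine ⟨A * 2 ^ (k + 1) * Real.exp (k + 1), by positivity, η * D / 2, by positivity,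
    fun n hn τ hτ s hs => ?_⟩
  have hk' : (1 : ℝ) ≤ k := by exact_mod_cast hk
  have hn' : 2 * (k : ℝ) ≤ n := by exact_mod_cast hn
  have hn0 : (1 : ℝ) ≤ n := by linarith
  have hv : 1 / 2 ≤ 1 - (k : ℝ) / n := by
    have : (k : ℝ) / n ≤ 1 / 2 := by
      rw [div_le_iff₀ (by linarith)]; linarith
    linarith
  have hv1 : 1 - (k : ℝ) / n ≤ 1 := by
    have : 0 ≤ (k : ℝ) / n := by positivity
    linarith
  set t : ℝ := 1 + n * η with ht
  have ht0 : 0 ≤ t := by positivity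
  obtain ⟨hint, hval⟩ := main_int n k t
  refine (integral_mono_of_nonneg (Eventually.of_forall fun g => ?_)
    (hint.const_mul (A * Real.exp (-(n * η * D)))) (Eventually.of_forall fun g => ?_)).trans ?_
  · simp only [bExp, Pi.zero_apply]
    refine div_nonneg (Finset.sum_nonneg fun x _ => mul_nonneg (abs_nonneg _) ?_) (by positivity)
    split_ifs <;> norm_num
  · simp only [bExp]
    rw [div_le_iff₀ (by positivity)]
    have hS : Real.exp (t * (∑ i, |g.1 i| + |g.2|)) ≤
        (∏ i, (Real.exp (t * g.1 i) + Real.exp (-t * g.1 i))) *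
        (Real.exp (t * g.2) + Real.exp (-t * g.2)) := by
      rw [mul_add, Real.exp_add, Finset.mul_sum, Real.exp_sum]
      refine mul_le_mul (Finset.prod_le_prod (fun i _ => (Real.exp_pos _).le)
        fun i _ => aux_abs t _) (aux_abs t _) (Real.exp_pos _).le ?_
      exact Finset.prod_nonneg fun i _ => by positivity
    refine (Finset.sum_le_card_nsmul _ _ (A * Real.exp (-(n * η * D)) *
      Real.exp (t * (∑ i, |g.1 i| + |g.2|))) fun x _ => ?_).trans ?_
    · have hG := Gval_le k τ hτ s hs g x
      split_ifs with hD'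
      · rw [mul_one]
        refine (hR _ hv hv1 _).trans ?_
        rw [mul_assoc, ← Real.exp_add]
        gcongr
        rw [ht]
        have : (0 : ℝ) ≤ n * η := by positivity
        nlinarith
      · rw [mul_zero]; positivity
    · simp only [Finset.card_univ, Fintype.card_pi, Fintype.card_bool, Finset.prod_const,
        Fintype.card_fin, nsmul_eq_mul]
      push_cast
      rw [mul_comm]
      gcongr
  · rw [integral_const_mul, hval, mul_pow, ← Real.exp_nat_mul]
    have hexp : ((k + 1 : ℕ) : ℝ) * ((n : ℝ)⁻¹ * t ^ 2 / 2) + -(n * η * D) ≤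
        (k + 1) + -(η * D / 2) * n := by
      have h1 : (n : ℝ)⁻¹ * t ^ 2 / 2 ≤ 1 + n * η ^ 2 := by
        rw [inv_mul_eq_div, div_div, div_le_iff₀ (by linarith), ht]
        nlinarith [sq_nonneg (1 - n * η)]
      have h2 : ((k : ℝ) + 1) * η = D / 2 := by
        rw [hη]; field_simp
      have h3 := mul_le_mul_of_nonneg_left h1 (by positivity : (0 : ℝ) ≤ (k : ℝ) + 1)
      have h4 : ((k : ℝ) + 1) * (1 + n * η ^ 2) = (k + 1) + n * η * (D / 2) := by
        rw [← h2]; ring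
      push_cast
      linarith
    have := Real.exp_le_exp.mpr hexp
    rw [Real.exp_add, Real.exp_add] at this
    calc _ = A * 2 ^ (k + 1) * (Real.exp (((k + 1 : ℕ) : ℝ) * ((n : ℝ)⁻¹ * t ^ 2 / 2)) *
          Real.exp (-(n * η * D))) := by ring
      _ ≤ A * 2 ^ (k + 1) * (Real.exp (k + 1) * Real.exp (-(η * D / 2) * n)) := by gcongr
      _ = _ := by ring
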